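/- arXiv:0804.1491 — 4 statements merged into one kernel-verified Lean document; each statement's English description precedes it below -/
import Mathlib

section
/- Let N be a normal subgroup of GAₙ containing all diagonal automorphisms. Then every tame automorphism belongs to N. -/
open MvPolynomial

/-- The group `GAₙ` of polynomial automorphisms of `kⁿ`, identified with the group of
`k`-algebra automorphisms of the polynomial ring `k[X₁,…,Xₙ]`; under this identification
composition of polynomial maps corresponds to reversed composition of algebra
automorphisms: `(F∘G)* = G* ∘ F*`. -/
abbrev PolyAut (k : Type*) [Field k] (n : ℕ) :=
  MvPolynomial (Fin n) k ≃ₐ[k] MvPolynomial (Fin n) k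

/-- `G` is diagonal if `G*(Xᵢ) = cᵢ Xᵢ` with all `cᵢ ≠ 0`. -/
def IsDiagonal {k : Type*} [Field k] {n : ℕ} (G : PolyAut k n) : Prop :=
  ∀ i : Fin n, ∃ c : k, c ≠ 0 ∧ G (X i) = C c * X i

/-- `G` is elementary if for some index `i`, `G*(Xᵢ) = Xᵢ + g` where `g` does not involve
`Xᵢ`, and `G*(Xⱼ) = Xⱼ` for `j ≠ i`. -/
def IsElementary {k : Type*} [Field k] {n : ℕ} (G : PolyAut k n) : Prop :=
  ∃ i : Fin n, ∃ g : MvPolynomial (Fin n) k, i ∉ g.vars ∧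
    G (X i) = X i + g ∧ ∀ j : Fin n, j ≠ i → G (X j) = X j

/-- `G` is affine if each `G*(Xᵢ)` has total degree at most 1. -/
def IsAffine {k : Type*} [Field k] {n : ℕ} (G : PolyAut k n) : Prop :=
  ∀ i : Fin n, (G (X i)).totalDegree ≤ 1

/-- `G` is tame if it lies in the subgroup of `GAₙ` generated by the affine and the
elementary automorphisms. -/
def IsTame {k : Type*} [Field k] {n : ℕ} (G : PolyAut k n) : Prop :=
  G ∈ Subgroup.closure {H : PolyAut k n | IsAffine H ∨ IsElementary H}

/-!
Let `E` add to each `Xᵢ` with `i ∈ S` a polynomial `gᵢ` in the variables outside `S`, and let `D_a`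
scale the `Xᵢ` with `i ∈ S` by a unit `a`. Then `D_a⁻¹ E D_a` adds `a gᵢ` instead of `gᵢ`. So if
`a + b = 1`, then `E = (D_a⁻¹ E D_a) (D_b⁻¹ E D_b)`, and modulo a normal subgroup containing all
diagonal automorphisms this reads `e = e²`, whence `e = 1`. Elementary automorphisms and
translations are of this form, and so are the transvections, which together with the diagonal
matrices generate the general linear group.
-/

theorem mem_of_eq_conj_mul_conj {G : Type*} [Group G] {N : Subgroup G} [N.Normal] {a b g : G}
    (ha : a ∈ N) (hb : b ∈ N) (h : g = a⁻¹ * g * a * (b⁻¹ * g * b)) : g ∈ N := by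
  rw [← QuotientGroup.eq_one_iff] at ha hb ⊢
  have hsq : (g : G ⧸ N) = g * g := by
    simpa only [QuotientGroup.mk_mul, QuotientGroup.mk_inv, ha, hb, inv_one, one_mul, mul_one]
      using congrArg (QuotientGroup.mk (s := N)) h
  exact left_eq_mul.mp hsq

theorem exists_units_add_eq_one (K : Type*) [DivisionRing K] [Nontrivial Kˣ] :
    ∃ a b : Kˣ, (a : K) + b = 1 := by
  obtain ⟨a, ha⟩ := exists_ne (1 : Kˣ)
  have hb : 1 - (a : K) ≠ 0 := sub_ne_zero.mpr fun h => ha (Units.ext h.symm)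
  exact ⟨a, Units.mk0 _ hb, add_sub_cancel _ _⟩

theorem nontrivial_units_of_charZero (R : Type*) [Ring R] [CharZero R] : Nontrivial Rˣ := by
  refine ⟨-1, 1, fun h => ?_⟩
  have hcast : ((-1 : ℤ) : R) = (1 : ℤ) := by simpa using congrArg Units.val h
  exact absurd (Int.cast_injective hcast) (by decide)

section Automorphisms

section CommSemiring

variable {σ R : Type*} [CommSemiring R]

theorem mvPolynomial_algEquiv_ext {F G : MvPolynomial σ R ≃ₐ[R] MvPolynomial σ R}
    (h : ∀ i, F (X i) = G (X i)) : F = G :=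
  AlgEquiv.coe_toAlgHom_injective (MvPolynomial.algHom_ext h)

theorem algEquiv_apply_of_mem_supported {S : Set σ}
    {F : MvPolynomial σ R ≃ₐ[R] MvPolynomial σ R} (hF : ∀ i ∈ S, F (X i) = X i)
    {p : MvPolynomial σ R} (hp : p ∈ supported R S) : F p = p := by
  have hFX : Set.EqOn (F : MvPolynomial σ R →ₐ[R] MvPolynomial σ R)
      (AlgHom.id R (MvPolynomial σ R)) (X '' S) := by
    rintro _ ⟨i, hi, rfl⟩
    exact hF i hi
  exact AlgHom.eqOn_adjoin_iff.mpr hFX hp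

/-- The diagonal automorphism `Xᵢ ↦ uᵢ Xᵢ`. -/
noncomputable def rescaleAut (u : σ → Rˣ) : MvPolynomial σ R ≃ₐ[R] MvPolynomial σ R :=
  AlgEquiv.ofAlgHom (aeval fun i => (u i : R) • X i) (aeval fun i => (↑(u i)⁻¹ : R) • X i)
    (by ext1 i; simp [smul_smul])
    (by ext1 i; simp [smul_smul])

@[simp]
theorem rescaleAut_X (u : σ → Rˣ) (i : σ) : rescaleAut u (X i) = (u i : R) • X i :=
  aeval_X _ i

/-- The diagonal automorphism `D_a` scaling the variables in `S` by `a` and fixing the others. -/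
noncomputable def dilationAut (S : Set σ) (a : Rˣ) : MvPolynomial σ R ≃ₐ[R] MvPolynomial σ R :=
  rescaleAut (S.mulIndicator fun _ => a)

theorem dilationAut_X_of_mem {S : Set σ} (a : Rˣ) {i : σ} (hi : i ∈ S) :
    dilationAut S a (X i) = (a : R) • X i := by
  rw [dilationAut, rescaleAut_X, Set.mulIndicator_of_mem hi]

theorem dilationAut_X_of_notMem {S : Set σ} (a : Rˣ) {i : σ} (hi : i ∉ S) :
    dilationAut S a (X i) = X i := by
  rw [dilationAut, rescaleAut_X, Set.mulIndicator_of_notMem hi, Units.val_one, one_smul]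

end CommSemiring

variable {σ R : Type*} [CommRing R]

/-- The translation `Xᵢ ↦ Xᵢ + bᵢ`. -/
noncomputable def translationAut (b : σ → R) : MvPolynomial σ R ≃ₐ[R] MvPolynomial σ R :=
  AlgEquiv.ofAlgHom (aeval fun i => X i + C (b i)) (aeval fun i => X i - C (b i))
    (by ext1 i; simp [algHom_C])
    (by ext1 i; simp [algHom_C])

@[simp]
theorem translationAut_X (b : σ → R) (i : σ) : translationAut b (X i) = X i + C (b i) :=
  aeval_X _ i

/-- The linear automorphism `Xᵢ ↦ ∑ⱼ Aᵢⱼ Xⱼ`, an antihomomorphism in the matrix `A`. -/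
noncomputable def linearAut [Fintype σ] [DecidableEq σ] (A : GL σ R) :
    MvPolynomial σ R ≃ₐ[R] MvPolynomial σ R :=
  AlgEquiv.ofAlgHom (bind₁ A.val.toMvPolynomial) (bind₁ A⁻¹.val.toMvPolynomial)
    (by ext1 i; simp [← Matrix.toMvPolynomial_mul])
    (by ext1 i; simp [← Matrix.toMvPolynomial_mul])

@[simp]
theorem linearAut_X [Fintype σ] [DecidableEq σ] (A : GL σ R) (i : σ) :
    linearAut A (X i) = A.val.toMvPolynomial i :=
  bind₁_X_right _ i

end Automorphisms

section Shears

variable {σ R : Type*} [CommRing R] {S : Set σ} {E : MvPolynomial σ R ≃ₐ[R] MvPolynomial σ R}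

/-- `E` is a shear along `S` if it adds to each `Xᵢ` with `i ∈ S` a polynomial in the variables
outside `S`, and fixes these variables. Elementary automorphisms are the shears along singletons,
translations are shears along the set of all indices. -/
def IsShearAlong (S : Set σ) (E : MvPolynomial σ R ≃ₐ[R] MvPolynomial σ R) : Prop :=
  (∀ i ∈ S, E (X i) - X i ∈ supported R Sᶜ) ∧ ∀ i ∉ S, E (X i) = X i

theorem isShearAlong_univ_translationAut (b : σ → R) :
    IsShearAlong Set.univ (translationAut b) := by
  refine ⟨fun i _ => ?_, fun i hi => (hi trivial).elim⟩
  rw [translationAut_X, add_sub_cancel_left]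
  exact (supported R _).algebraMap_mem (b i)

theorem IsElementary.exists_isShearAlong {k : Type*} [Field k] {n : ℕ} {E : PolyAut k n}
    (hE : IsElementary E) : ∃ i, IsShearAlong {i} E := by
  obtain ⟨i, g, hg, hEi, hEj⟩ := hE
  refine ⟨i, ?_, hEj⟩
  rintro _ rfl
  rw [hEi, add_sub_cancel_left, mem_supported]
  exact fun j hj hji => hg (hji ▸ hj)

theorem IsShearAlong.sub_X_mem_supported (hE : IsShearAlong S E) (i : σ) :
    E (X i) - X i ∈ supported R Sᶜ := by
  by_cases hi : i ∈ S
  · exact hE.1 i hi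
  · rw [hE.2 i hi, sub_self]
    exact zero_mem _

theorem IsShearAlong.conj_dilationAut_X (hE : IsShearAlong S E) (a : Rˣ) (i : σ) :
    ((dilationAut S a)⁻¹ * E * dilationAut S a) (X i) = X i + (a : R) • (E (X i) - X i) := by
  suffices h : E (dilationAut S a (X i)) = dilationAut S a (X i + (a : R) • (E (X i) - X i)) by
    rw [AlgEquiv.mul_apply, AlgEquiv.mul_apply, h, ← AlgEquiv.mul_apply, inv_mul_cancel,
      AlgEquiv.one_apply]
  rw [map_add, map_smul, algEquiv_apply_of_mem_supported
    (fun j => dilationAut_X_of_notMem a) (hE.sub_X_mem_supported i)]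
  by_cases hi : i ∈ S
  · rw [dilationAut_X_of_mem a hi, map_smul, ← smul_add, add_sub_cancel]
  · rw [dilationAut_X_of_notMem a hi, hE.2 i hi, sub_self, smul_zero, add_zero]

theorem IsShearAlong.eq_conj_mul_conj (hE : IsShearAlong S E) {a b : Rˣ} (hab : (a : R) + b = 1) :
    E = (dilationAut S a)⁻¹ * E * dilationAut S a *
      ((dilationAut S b)⁻¹ * E * dilationAut S b) := by
  set F := (dilationAut S a)⁻¹ * E * dilationAut S a
  have hF : ∀ j ∈ Sᶜ, F (X j) = X j := fun j hj => by
    rw [hE.conj_dilationAut_X, hE.2 j hj, sub_self, smul_zero, add_zero]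
  refine mvPolynomial_algEquiv_ext fun i => ?_
  rw [AlgEquiv.mul_apply, hE.conj_dilationAut_X, map_add, map_smul, hE.conj_dilationAut_X,
    algEquiv_apply_of_mem_supported hF (hE.sub_X_mem_supported i), add_assoc, ← add_smul, hab,
    one_smul, add_sub_cancel]

theorem IsShearAlong.mem_of_normal {N : Subgroup (MvPolynomial σ R ≃ₐ[R] MvPolynomial σ R)}
    [N.Normal] (hN : ∀ u : σ → Rˣ, rescaleAut u ∈ N) {a b : Rˣ} (hab : (a : R) + b = 1)
    (hE : IsShearAlong S E) : E ∈ N :=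
  mem_of_eq_conj_mul_conj (hN _) (hN _) (hE.eq_conj_mul_conj hab)

end Shears

section AffineAutomorphisms

section CommSemiring

variable {σ R : Type*} [CommSemiring R] [Fintype σ] [DecidableEq σ]

theorem toMvPolynomial_diagonal (d : σ → R) (i : σ) :
    (Matrix.diagonal d).toMvPolynomial i = d i • X i := by
  rw [Matrix.toMvPolynomial, Finset.sum_eq_single i]
  · rw [Matrix.diagonal_apply_eq, smul_eq_C_mul, C_mul_X_eq_monomial]
  · intro j _ hji
    rw [Matrix.diagonal_apply_ne' _ hji, monomial_zero]
  · exact fun hi => (hi (Finset.mem_univ i)).elim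

theorem toMvPolynomial_single (i j : σ) (c : R) :
    (Matrix.single i j c).toMvPolynomial = Pi.single i (c • X j) := by
  ext1 l
  rw [Matrix.toMvPolynomial, Finset.sum_eq_single j]
  · obtain rfl | hil := eq_or_ne i l
    · rw [Matrix.single_apply_same, Pi.single_eq_same, smul_eq_C_mul, C_mul_X_eq_monomial]
    · rw [Matrix.single_apply_of_row_ne hil, Pi.single_eq_of_ne hil.symm, monomial_zero]
  · intro m _ hmj
    rw [Matrix.single_apply_of_col_ne _ _ hmj.symm, monomial_zero]
  · exact fun hj => (hj (Finset.mem_univ j)).elim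

end CommSemiring

section CommRing

variable {σ R : Type*} [CommRing R]

theorem isHomogeneous_one_sub_C_coeff_zero {p : MvPolynomial σ R} (hp : p.totalDegree ≤ 1) :
    (p - C (coeff 0 p)).IsHomogeneous 1 := by
  classical
  intro d hd
  have hd_ne : d ≠ 0 := by
    rintro rfl
    exact hd (by rw [coeff_sub, coeff_zero_C, sub_self])
  rw [coeff_sub, coeff_C, if_neg hd_ne.symm, sub_zero] at hd
  have hd_le : d.degree ≤ 1 := (le_totalDegree (mem_support_iff.mpr hd)).trans hp
  have hd_pos : d.degree ≠ 0 := (Finsupp.degree_eq_zero_iff d).not.mpr hd_ne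
  rw [Pi.one_def, ← Finsupp.degree_eq_weight_one]
  exact le_antisymm hd_le (Nat.one_le_iff_ne_zero.mpr hd_pos)

theorem exists_eq_toMvPolynomial_add_C [Fintype σ] {ι : Type*} {p : ι → MvPolynomial σ R}
    (hp : ∀ i, (p i).totalDegree ≤ 1) :
    ∃ (A : Matrix ι σ R) (b : ι → R), ∀ i, p i = A.toMvPolynomial i + C (b i) := by
  have hspan (i : ι) : p i - C (coeff 0 (p i)) ∈ Submodule.span R (Set.range X) := by
    rw [← homogeneousSubmodule_one_eq_span_X]
    exact isHomogeneous_one_sub_C_coeff_zero (hp i)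
  simp only [Submodule.mem_span_range_iff_exists_fun] at hspan
  choose A hA using hspan
  refine ⟨A, fun i => coeff 0 (p i), fun i => ?_⟩
  rw [← sub_eq_iff_eq_add, ← hA]
  simp only [Matrix.toMvPolynomial, smul_eq_C_mul, C_mul_X_eq_monomial]

theorem isShearAlong_of_X_eq_transvection [Fintype σ] [DecidableEq σ] {i j : σ} (hij : i ≠ j)
    {c : R} {E : MvPolynomial σ R ≃ₐ[R] MvPolynomial σ R}
    (hE : ∀ l, E (X l) = (Matrix.transvection i j c).toMvPolynomial l) : IsShearAlong {i} E := by
  have hEX (l : σ) : E (X l) = X l + Pi.single (M := fun _ => MvPolynomial σ R) i (c • X j) l := by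
    rw [hE, Matrix.transvection, Matrix.toMvPolynomial_add, Matrix.toMvPolynomial_one,
      Pi.add_apply, toMvPolynomial_single]
  constructor
  · rintro _ rfl
    rw [hEX, add_sub_cancel_left, Pi.single_eq_same]
    exact Subalgebra.smul_mem _
      (Algebra.subset_adjoin (Set.mem_image_of_mem X (Set.mem_compl_singleton_iff.mpr hij.symm))) c
  · intro l hl
    rw [hEX, Pi.single_eq_of_ne hl, add_zero]

end CommRing

variable {σ k : Type*} [Field k]
  {F : MvPolynomial σ k ≃ₐ[k] MvPolynomial σ k}
  {H : Subgroup (MvPolynomial σ k ≃ₐ[k] MvPolynomial σ k)}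

theorem isUnit_of_X_eq_toMvPolynomial [Fintype σ] [DecidableEq σ] {A : Matrix σ σ k}
    (hF : ∀ i, F (X i) = A.toMvPolynomial i) : IsUnit A := by
  rw [← Matrix.linearIndependent_rows_iff_isUnit]
  have hFX : LinearIndependent k fun i => F (X i) :=
    (linearIndependent_X σ k).map' F.toLinearMap (LinearMap.ker_eq_bot.mpr F.injective)
  refine LinearIndependent.of_comp (Fintype.linearCombination k (X : σ → MvPolynomial σ k)) ?_
  convert hFX using 1
  ext1 i
  change Fintype.linearCombination k X (A i) = F (X i)
  simp only [hF, Fintype.linearCombination_apply, Matrix.toMvPolynomial, smul_eq_C_mul,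
    C_mul_X_eq_monomial]

theorem mem_of_X_eq_toMvPolynomial [Fintype σ] (hscale : ∀ u : σ → kˣ, rescaleAut u ∈ H)
    (hshear : ∀ S E, IsShearAlong S E → E ∈ H) {A : Matrix σ σ k}
    (hF : ∀ i, F (X i) = A.toMvPolynomial i) : F ∈ H := by
  classical
  have hA : A.det ≠ 0 :=
    ((Matrix.isUnit_iff_isUnit_det A).mp (isUnit_of_X_eq_toMvPolynomial hF)).ne_zero
  revert F
  refine Matrix.diagonal_transvection_induction_of_det_ne_zero
    (fun A => ∀ {F : MvPolynomial σ k ≃ₐ[k] MvPolynomial σ k},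
      (∀ i, F (X i) = A.toMvPolynomial i) → F ∈ H) A hA ?diagonal ?transvection ?mul
  case diagonal =>
    intro d hd F hF
    rw [Matrix.det_diagonal, Finset.prod_ne_zero_iff] at hd
    convert hscale fun i => Units.mk0 (d i) (hd i (Finset.mem_univ i))
    exact mvPolynomial_algEquiv_ext fun i => by
      rw [hF, toMvPolynomial_diagonal, rescaleAut_X, Units.val_mk0]
  case transvection =>
    exact fun t F hF => hshear _ _ (isShearAlong_of_X_eq_transvection t.hij hF)
  case mul =>
    intro A B hA hB ihA ihB F hF
    have hFAB : F = linearAut (.mkOfDetNeZero B hB) * linearAut (.mkOfDetNeZero A hA) :=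
      mvPolynomial_algEquiv_ext fun i => by
        rw [hF, Matrix.toMvPolynomial_mul, AlgEquiv.mul_apply, linearAut_X]
        rfl
    rw [hFAB]
    exact H.mul_mem (ihB (linearAut_X _)) (ihA (linearAut_X _))

theorem mem_of_totalDegree_X_le_one [Finite σ] (hscale : ∀ u : σ → kˣ, rescaleAut u ∈ H)
    (hshear : ∀ S E, IsShearAlong S E → E ∈ H) (hF : ∀ i, (F (X i)).totalDegree ≤ 1) :
    F ∈ H := by
  have := Fintype.ofFinite σ
  obtain ⟨A, b, hAb⟩ := exists_eq_toMvPolynomial_add_C hF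
  have hlinear (i : σ) : (F * translationAut (-b)) (X i) = A.toMvPolynomial i := by
    rw [AlgEquiv.mul_apply, translationAut_X, map_add, hAb, Pi.neg_apply, C_neg, map_neg,
      ← algebraMap_eq, F.commutes, add_neg_cancel_right]
  exact (H.mul_mem_cancel_right (hshear _ _ (isShearAlong_univ_translationAut (-b)))).mp
    (mem_of_X_eq_toMvPolynomial hscale hshear hlinear)

end AffineAutomorphisms

theorem isDiagonal_rescaleAut {k : Type*} [Field k] {n : ℕ} (u : Fin n → kˣ) :
    IsDiagonal (rescaleAut u) :=
  fun i => ⟨u i, (u i).ne_zero, by rw [rescaleAut_X, smul_eq_C_mul]⟩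

theorem tame_mem_normal_subgroup_of_diagonals_general (k : Type*) [Field k] [Nontrivial kˣ] (n : ℕ)
    (N : Subgroup (PolyAut k n)) (hN : N.Normal) (hdiag : ∀ D : PolyAut k n, IsDiagonal D → D ∈ N) :
    ∀ F : PolyAut k n, IsTame F → F ∈ N := by
  obtain ⟨a, b, hab⟩ := exists_units_add_eq_one k
  have hscale (u : Fin n → kˣ) : rescaleAut u ∈ N := hdiag _ (isDiagonal_rescaleAut u)
  have hshear (S : Set (Fin n)) (E : PolyAut k n) (hE : IsShearAlong S E) : E ∈ N :=
    hE.mem_of_normal hscale hab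
  intro F hF
  refine (Subgroup.closure_le N).mpr ?_ hF
  rintro G (hG | hG)
  · exact mem_of_totalDegree_X_le_one hscale hshear hG
  · obtain ⟨i, hi⟩ := hG.exists_isShearAlong
    exact hshear {i} G hi

/-- Let `N` be a normal subgroup of `GAₙ` containing all diagonal automorphisms.  Then
every tame automorphism belongs to `N`. -/
theorem tame_mem_normal_subgroup_of_diagonals (k : Type*) [Field k] [CharZero k] (n : ℕ)
    (hn : 1 ≤ n) (N : Subgroup (PolyAut k n)) (hN : N.Normal)
    (hdiag : ∀ D : PolyAut k n, IsDiagonal D → D ∈ N) :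
    ∀ F : PolyAut k n, IsTame F → F ∈ N := by
  have := nontrivial_units_of_charZero k
  exact tame_mem_normal_subgroup_of_diagonals_general k n N hN hdiag
end

section
/- Let F ∈ GAₙ be the elementary automorphism with F*(Xᵢ) = Xᵢ + g (g not involving Xᵢ) and F*(Xⱼ) = Xⱼ for j ≠ i, and let D ∈ GAₙ be the diagonal automorphism with D*(Xᵢ) = 2Xᵢ and D*(Xⱼ) = Xⱼ for j ≠ i. Then the algebra automorphisms satisfy (D*)⁻¹∘F*∘D* = F*∘F*; equivalently, as polynomial automorphisms, F = (F⁻¹∘D∘F)∘D⁻¹. -/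
open MvPolynomial

/-!
Conjugating the translation `Xᵢ ↦ Xᵢ + g` by the dilation `Xᵢ ↦ m Xᵢ` scales `g` by `m`, because
`g` does not involve `Xᵢ` and so is fixed by both maps. For the same reason iterating the
translation adds up its increments, so that its `m`-th power also has increment `m g`.
-/

section SubstVar

variable {σ R : Type*} [CommSemiring R] {i : σ} {c g p q : MvPolynomial σ R}

open Classical in
/-- Substitution of the polynomial `p` for the single variable `Xᵢ`. Both the elementary and the
diagonal automorphisms are of this form, with `p = Xᵢ + g` and `p = c Xᵢ` respectively. -/
noncomputable def substVar (i : σ) (p : MvPolynomial σ R) :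
    MvPolynomial σ R →ₐ[R] MvPolynomial σ R :=
  aeval (Function.update X i p)

@[simp]
theorem substVar_X_self (i : σ) (p : MvPolynomial σ R) : substVar i p (X i) = p := by
  simp [substVar]

theorem substVar_X_of_ne {j : σ} (hj : j ≠ i) (p : MvPolynomial σ R) :
    substVar i p (X j) = X j := by
  simp [substVar, hj]

theorem eq_substVar {φ : MvPolynomial σ R →ₐ[R] MvPolynomial σ R} (hi : φ (X i) = p)
    (hj : ∀ j ≠ i, φ (X j) = X j) : φ = substVar i p := by
  refine algHom_ext fun j => ?_
  obtain rfl | hne := eq_or_ne j i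
  · rw [hi, substVar_X_self]
  · rw [hj j hne, substVar_X_of_ne hne]

theorem substVar_of_notMem_vars (hq : i ∉ q.vars) (p : MvPolynomial σ R) :
    substVar i p q = q :=
  hom_congr_vars (f₁ := (substVar i p).toRingHom) (f₂ := RingHom.id _) (by ext; simp)
    (fun _ hj _ => substVar_X_of_ne (ne_of_mem_of_not_mem hj hq) p) rfl

theorem substVar_mul_substVar (i : σ) (p q : MvPolynomial σ R) :
    substVar i p * substVar i q = substVar i (substVar i p q) :=
  eq_substVar (by simp) fun j hj => by simp [substVar_X_of_ne hj]

theorem substVar_X_add_pow (hg : i ∉ g.vars) (m : ℕ) :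
    substVar i (X i + g) ^ m = substVar i (X i + (m : MvPolynomial σ R) * g) := by
  induction m with
  | zero => exact eq_substVar (by simp) fun _ _ => rfl
  | succ m ih =>
    have hstep : substVar i (X i + (m : MvPolynomial σ R) * g) (X i + g) =
        X i + ((m + 1 : ℕ) : MvPolynomial σ R) * g := by
      rw [map_add, substVar_X_self, substVar_of_notMem_vars hg]
      push_cast
      ring
    rw [pow_succ, ih, substVar_mul_substVar, hstep]

theorem substVar_X_add_mul_substVar_mul_X (hc : i ∉ c.vars) (hg : i ∉ g.vars) :
    substVar i (X i + g) * substVar i (c * X i) =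
      substVar i (c * X i) * substVar i (X i + c * g) := by
  simp only [substVar_mul_substVar, map_add, map_mul, substVar_X_self,
    substVar_of_notMem_vars hc, substVar_of_notMem_vars hg, mul_add]

end SubstVar

theorem elementary_conj_diagonal_general {σ R : Type*} [CommSemiring R] {i : σ}
    {g : MvPolynomial σ R} (hg : i ∉ g.vars) (m : ℕ)
    {F D : MvPolynomial σ R ≃ₐ[R] MvPolynomial σ R}
    (hFi : F (X i) = X i + g) (hFj : ∀ j ≠ i, F (X j) = X j)
    (hDi : D (X i) = (m : MvPolynomial σ R) * X i) (hDj : ∀ j ≠ i, D (X j) = X j) :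
    D⁻¹ * F * D = F ^ m := by
  have hm : i ∉ (m : MvPolynomial σ R).vars := by
    rw [← map_natCast C m, vars_C]
    exact Finset.notMem_empty i
  have hF : AlgEquiv.toAlgHomHom R _ F = substVar i (X i + g) := eq_substVar hFi hFj
  have hD : AlgEquiv.toAlgHomHom R _ D = substVar i ((m : MvPolynomial σ R) * X i) :=
    eq_substVar hDi hDj
  have hcomm : AlgEquiv.toAlgHomHom R _ (F * D) = AlgEquiv.toAlgHomHom R _ (D * F ^ m) := by
    rw [map_mul, map_mul, map_pow, hF, hD, substVar_X_add_pow hg,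
      substVar_X_add_mul_substVar_mul_X hm hg]
  rw [mul_assoc, inv_mul_eq_iff_eq_mul]
  exact AlgEquiv.coe_toAlgHom_injective hcomm

/-- Let `F` be the elementary automorphism with `F*(Xᵢ) = Xᵢ + g` (`g` not involving
`Xᵢ`), `F*(Xⱼ) = Xⱼ` for `j ≠ i`, and let `D` be the diagonal automorphism with
`D*(Xᵢ) = 2Xᵢ`, `D*(Xⱼ) = Xⱼ` for `j ≠ i`.  Then `(D*)⁻¹ ∘ F* ∘ D* = F* ∘ F*`;
equivalently, as polynomial maps, `F = (F⁻¹∘D∘F)∘D⁻¹`. -/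
theorem elementary_conj_diagonal (k : Type*) [Field k] [CharZero k] (n : ℕ)
    (i : Fin n) (g : MvPolynomial (Fin n) k) (hg : i ∉ g.vars)
    (F D : PolyAut k n)
    (hFi : F (X i) = X i + g) (hFj : ∀ j : Fin n, j ≠ i → F (X j) = X j)
    (hDi : D (X i) = 2 * X i) (hDj : ∀ j : Fin n, j ≠ i → D (X j) = X j) :
    D⁻¹ * F * D = F * F := by
  rw [← pow_two]
  exact elementary_conj_diagonal_general hg 2 hFi hFj (mod_cast hDi) hDj
end

section
/- For n ≥ 2, every elementary automorphism F ∈ GAₙ can be written as F = (E⁻¹∘D∘E)∘D⁻¹ (composition of polynomial automorphisms), where E is an elementary automorphism and D is a diagonal automorphism whose jacobian determinant equals 1. -/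
open MvPolynomial

/-- `G` is jacobian if the determinant of its jacobian matrix `(∂G*(Xᵢ)/∂Xⱼ)` equals 1. -/
def IsJacobian {k : Type*} [Field k] {n : ℕ} (G : PolyAut k n) : Prop :=
  (Matrix.of fun i j : Fin n => MvPolynomial.pderiv j (G (X i))).det = 1

/-!
If the algebra automorphism `E` adds `h` to `Xᵢ` and `D` sends `Xⱼ` to `cⱼ Xⱼ`, then
`D⁻¹ * E * D * E⁻¹` is the elementary automorphism adding `g` to `Xᵢ` as soon as `D (g + h) = cᵢ h`.
Since `D` acts on the monomial `X^a` through the scalar `c^a := ∏ⱼ cⱼ^aⱼ`, this linear equation can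
be solved for `h` monomial by monomial, with no new monomials, unless `c^a = cᵢ` for some `X^a`
occurring in `g`. Take `cⱼ = u` for `j ≠ i` and `cᵢ = u^(1 - n)`: then `∏ cⱼ = 1`, and as `g`
does not involve `Xᵢ`, a resonance `c^a = cᵢ` would mean `u^(|a| + n - 1) = 1`. An infinite field
contains some `u ≠ 0` with no such relation for `|a| ≤ deg g`.
-/

section Shift

variable {σ R : Type*} [CommSemiring R]

theorem algHom_apply_eq_self_of_vars {φ : MvPolynomial σ R →ₐ[R] MvPolynomial σ R}
    {p : MvPolynomial σ R} (hφ : ∀ j ∈ p.vars, φ (X j) = X j) : φ p = p :=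
  hom_congr_vars (f₁ := (φ : MvPolynomial σ R →+* MvPolynomial σ R)) (f₂ := RingHom.id _)
    (RingHom.ext φ.commutes) (fun j hj _ => hφ j hj) rfl

variable [DecidableEq σ]

/-- The endomorphism `Xᵢ ↦ Xᵢ + h` of the polynomial ring, fixing the other variables; it is
an automorphism when `h` does not involve `Xᵢ`, see `elementaryAut`. -/
noncomputable def shiftHom (i : σ) (h : MvPolynomial σ R) :
    MvPolynomial σ R →ₐ[R] MvPolynomial σ R :=
  aeval (Function.update X i (X i + h))

@[simp]
theorem shiftHom_X_self (i : σ) (h : MvPolynomial σ R) : shiftHom i h (X i) = X i + h := by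
  simp [shiftHom]

@[simp]
theorem shiftHom_X_of_ne {i j : σ} (hj : j ≠ i) (h : MvPolynomial σ R) :
    shiftHom i h (X j) = X j := by
  simp [shiftHom, hj]

theorem shiftHom_apply_of_notMem_vars {i : σ} (h : MvPolynomial σ R) {p : MvPolynomial σ R}
    (hp : i ∉ p.vars) : shiftHom i h p = p :=
  algHom_apply_eq_self_of_vars fun _ hj => shiftHom_X_of_ne (ne_of_mem_of_not_mem hj hp) h

theorem algHom_eq_shiftHom_iff {φ : MvPolynomial σ R →ₐ[R] MvPolynomial σ R} {i : σ}
    {h : MvPolynomial σ R} :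
    φ = shiftHom i h ↔ φ (X i) = X i + h ∧ ∀ j, j ≠ i → φ (X j) = X j := by
  refine ⟨?_, fun ⟨hi, hne⟩ => algHom_ext fun j => ?_⟩
  · rintro rfl
    exact ⟨shiftHom_X_self i h, fun j hj => shiftHom_X_of_ne hj h⟩
  · rcases eq_or_ne j i with rfl | hj
    · rw [hi, shiftHom_X_self]
    · rw [hne j hj, shiftHom_X_of_ne hj]

theorem shiftHom_zero (i : σ) : shiftHom i (0 : MvPolynomial σ R) = AlgHom.id R _ :=
  (algHom_eq_shiftHom_iff.2 (by simp)).symm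

theorem shiftHom_comp_shiftHom {i : σ} (h : MvPolynomial σ R) {p : MvPolynomial σ R}
    (hp : i ∉ p.vars) : (shiftHom i h).comp (shiftHom i p) = shiftHom i (h + p) := by
  refine algHom_eq_shiftHom_iff.2 ⟨?_, fun j hj => by simp [hj]⟩
  simp [shiftHom_apply_of_notMem_vars h hp, add_assoc]

end Shift

/-- The elementary automorphism `Xᵢ ↦ Xᵢ + h`, where `h` does not involve `Xᵢ`. -/
noncomputable def elementaryAut {σ R : Type*} [DecidableEq σ] [CommRing R] (i : σ)
    (h : MvPolynomial σ R) (hh : i ∉ h.vars) :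
    MvPolynomial σ R ≃ₐ[R] MvPolynomial σ R :=
  AlgEquiv.ofAlgHom (shiftHom i h) (shiftHom i (-h))
    (by rw [shiftHom_comp_shiftHom h (by rwa [vars_neg]), add_neg_cancel, shiftHom_zero])
    (by rw [shiftHom_comp_shiftHom (-h) hh, neg_add_cancel, shiftHom_zero])

@[simp]
theorem elementaryAut_apply {σ R : Type*} [DecidableEq σ] [CommRing R] {i : σ}
    {h : MvPolynomial σ R} (hh : i ∉ h.vars) (p : MvPolynomial σ R) :
    elementaryAut i h hh p = shiftHom i h p :=
  rfl

section Diagonal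

variable {σ R : Type*} [CommSemiring R]

/-- The endomorphism `Xⱼ ↦ cⱼ Xⱼ` of the polynomial ring; it is an automorphism when all `cⱼ` are
units, see `diagonalAut`. -/
noncomputable def scaleHom (c : σ → R) : MvPolynomial σ R →ₐ[R] MvPolynomial σ R :=
  aeval fun j => C (c j) * X j

@[simp]
theorem scaleHom_X (c : σ → R) (j : σ) : scaleHom c (X j) = C (c j) * X j :=
  aeval_X _ j

theorem scaleHom_comp_scaleHom (c d : σ → R) :
    (scaleHom c).comp (scaleHom d) = scaleHom (c * d) :=
  algHom_ext fun j => by simp [algHom_C, algebraMap_eq, mul_comm, mul_left_comm]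

theorem scaleHom_one : scaleHom (1 : σ → R) = AlgHom.id R _ :=
  algHom_ext fun j => by simp

theorem scaleHom_monomial (c : σ → R) (a : σ →₀ ℕ) (r : R) :
    scaleHom c (monomial a r) = monomial a ((a.prod fun j m => c j ^ m) * r) := by
  rw [scaleHom, aeval_monomial, monomial_eq, C_mul, algebraMap_eq]
  simp only [mul_pow, Finsupp.prod_mul, map_finsuppProd, map_pow]
  rw [← mul_assoc, mul_comm (C r)]

theorem coeff_scaleHom (c : σ → R) (a : σ →₀ ℕ) (p : MvPolynomial σ R) :
    coeff a (scaleHom c p) = (a.prod fun j m => c j ^ m) * coeff a p := by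
  classical
  induction p using MvPolynomial.induction_on' with
  | monomial b r =>
    rw [scaleHom_monomial, coeff_monomial, coeff_monomial]
    split_ifs with hba
    · rw [hba]
    · rw [mul_zero]
  | add p q hp hq => rw [map_add, coeff_add, coeff_add, hp, hq, mul_add]

/-- The diagonal automorphism `Xⱼ ↦ cⱼ Xⱼ`. -/
noncomputable def diagonalAut (c : σ → Rˣ) : MvPolynomial σ R ≃ₐ[R] MvPolynomial σ R :=
  AlgEquiv.ofAlgHom (scaleHom fun j => ↑(c j)) (scaleHom fun j => ↑(c j)⁻¹)
    (by rw [scaleHom_comp_scaleHom, ← scaleHom_one]; congr; ext j; simp)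
    (by rw [scaleHom_comp_scaleHom, ← scaleHom_one]; congr; ext j; simp)

@[simp]
theorem diagonalAut_apply (c : σ → Rˣ) (p : MvPolynomial σ R) :
    diagonalAut c p = scaleHom (fun j => ↑(c j)) p :=
  rfl

end Diagonal

theorem scaleHom_comp_shiftHom {σ R : Type*} [DecidableEq σ] [CommSemiring R] {i : σ}
    {c : σ → R} {p q : MvPolynomial σ R}
    (hpq : scaleHom c p = C (c i) * q) :
    (scaleHom c).comp (shiftHom i p) = (shiftHom i q).comp (scaleHom c) := by
  refine algHom_ext fun j => ?_
  rcases eq_or_ne j i with rfl | hj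
  · simp [hpq, algHom_C, algebraMap_eq, mul_add]
  · simp [hj, algHom_C, algebraMap_eq]

theorem commutator_diagonalAut_elementaryAut {σ R : Type*} [DecidableEq σ] [CommRing R]
    {i : σ} {g h : MvPolynomial σ R} (hg : i ∉ g.vars) (hh : i ∉ h.vars) {c : σ → Rˣ}
    (hgh : scaleHom (fun j => (c j : R)) (g + h) = C (c i : R) * h) :
    (diagonalAut c)⁻¹ * elementaryAut i h hh * diagonalAut c * (elementaryAut i h hh)⁻¹ =
      elementaryAut i g hg := by
  rw [mul_inv_eq_iff_eq_mul, mul_assoc, inv_mul_eq_iff_eq_mul]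
  refine AlgEquiv.ext fun p => ?_
  simp only [AlgEquiv.mul_apply, elementaryAut_apply, diagonalAut_apply, ← AlgHom.comp_apply]
  rw [shiftHom_comp_shiftHom g hh, scaleHom_comp_shiftHom hgh]

theorem exists_scaleHom_add_eq_C_mul {σ K : Type*} [Field K] {c : σ → K} {l : K}
    {g : MvPolynomial σ K} (hl : ∀ a ∈ g.support, (a.prod fun j m => c j ^ m) ≠ l) :
    ∃ h : MvPolynomial σ K, h.vars ⊆ g.vars ∧ scaleHom c (g + h) = C l * h := by
  classical
  let w : (σ →₀ ℕ) → K := fun a => a.prod fun j m => c j ^ m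
  let h : MvPolynomial σ K := ∑ a ∈ g.support, monomial a ((l - w a)⁻¹ * (w a * coeff a g))
  have coeff_h (a : σ →₀ ℕ) : coeff a h = (l - w a)⁻¹ * (w a * coeff a g) := by
    simp +contextual [h, coeff_sum, coeff_monomial]
  have support_h : h.support ⊆ g.support := fun a ha => by
    contrapose! ha
    simp [coeff_h, notMem_support_iff.1 ha]
  refine ⟨h, fun j hj => ?_, ?_⟩
  · obtain ⟨a, ha, hja⟩ := (mem_vars_iff_mem_support j).1 hj
    exact (mem_vars_iff_mem_support j).2 ⟨a, support_h ha, hja⟩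
  · ext a
    rw [coeff_scaleHom, coeff_add, coeff_C_mul, coeff_h]
    by_cases ha : a ∈ g.support
    · have : l - w a ≠ 0 := sub_ne_zero.2 (hl a ha).symm
      change w a * (coeff a g + (l - w a)⁻¹ * (w a * coeff a g)) =
        l * ((l - w a)⁻¹ * (w a * coeff a g))
      field_simp
      ring
    · simp [notMem_support_iff.1 ha]

section BalancedWeights

variable {σ G : Type*} [DecidableEq σ] [Fintype σ]

/-- The weights `(u, …, u, u^(1 - n), u, …, u)`, where `n` is the number of variables and
the exceptional entry stands at `i`. -/
def balancedWeights [Group G] (i : σ) (u : G) : σ → G :=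
  Function.update (fun _ => u) i (u ^ (Fintype.card σ - 1))⁻¹

@[simp]
theorem balancedWeights_self [Group G] (i : σ) (u : G) :
    balancedWeights i u i = (u ^ (Fintype.card σ - 1))⁻¹ :=
  Function.update_self ..

theorem balancedWeights_of_ne [Group G] {i j : σ} (hj : j ≠ i) (u : G) :
    balancedWeights i u j = u :=
  Function.update_of_ne hj ..

theorem prod_balancedWeights [CommGroup G] (i : σ) (u : G) :
    ∏ j, balancedWeights i u j = 1 := by
  simp [balancedWeights, Finset.prod_update_of_mem, Finset.card_sdiff]

theorem prod_balancedWeights_pow [CommGroup G] {i : σ} (u : G) {a : σ →₀ ℕ} (ha : a i = 0) :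
    (a.prod fun j m => balancedWeights i u j ^ m) = u ^ a.degree := by
  rw [Finsupp.degree_apply, ← Finset.prod_pow_eq_pow_sum]
  refine Finsupp.prod_congr fun j hj => ?_
  rw [balancedWeights_of_ne]
  rintro rfl
  exact Finsupp.mem_support_iff.1 hj ha

theorem prod_balancedWeights_pow_ne_self [CommGroup G] {i : σ} {u : G} {a : σ →₀ ℕ} (ha : a i = 0)
    (hu : u ^ (a.degree + (Fintype.card σ - 1)) ≠ 1) :
    (a.prod fun j m => balancedWeights i u j ^ m) ≠ balancedWeights i u i := by
  rwa [prod_balancedWeights_pow u ha, balancedWeights_self, Ne, eq_inv_iff_mul_eq_one, ← pow_add]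

end BalancedWeights

theorem exists_units_pow_ne_one (K : Type*) [Field K] [Infinite K] (N : ℕ) :
    ∃ u : Kˣ, ∀ m, 0 < m → m ≤ N → u ^ m ≠ 1 := by
  have hX : (Polynomial.X * (Polynomial.X ^ N.factorial - Polynomial.C 1) : Polynomial K) ≠ 0 :=
    mul_ne_zero Polynomial.X_ne_zero (Polynomial.X_pow_sub_C_ne_zero N.factorial_pos 1)
  obtain ⟨x, hx⟩ : ∃ x : K, x * (x ^ N.factorial - 1) ≠ 0 := by
    contrapose! hX
    exact Polynomial.funext fun x => by simpa using hX x
  refine ⟨Units.mk0 x (left_ne_zero_of_mul hx), fun m hm hmN hxm => right_ne_zero_of_mul hx ?_⟩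
  have hx_pow : x ^ m = 1 := by simpa using congrArg Units.val hxm
  obtain ⟨d, hd⟩ := Nat.dvd_factorial hm hmN
  rw [hd, pow_mul, hx_pow, one_pow, sub_self]

section PolyAut

variable {k : Type*} [Field k] {n : ℕ}

theorem isElementary_iff_exists_eq_elementaryAut {G : PolyAut k n} :
    IsElementary G ↔ ∃ i g, ∃ hg : i ∉ g.vars, G = elementaryAut i g hg := by
  have eq_iff (i : Fin n) (g : MvPolynomial (Fin n) k) (hg : i ∉ g.vars) :
      G = elementaryAut i g hg ↔ G (X i) = X i + g ∧ ∀ j, j ≠ i → G (X j) = X j :=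
    AlgEquiv.coe_toAlgHom_injective.eq_iff.symm.trans algHom_eq_shiftHom_iff
  simp only [IsElementary, eq_iff, exists_prop]

theorem isDiagonal_diagonalAut (c : Fin n → kˣ) : IsDiagonal (diagonalAut c) :=
  fun i => ⟨c i, (c i).ne_zero, scaleHom_X _ i⟩

theorem isJacobian_diagonalAut_iff {c : Fin n → kˣ} :
    IsJacobian (diagonalAut c) ↔ ∏ i, c i = 1 := by
  have jacobian_eq : (Matrix.of fun i j : Fin n => pderiv j (diagonalAut c (X i))) =
      Matrix.diagonal fun i => C (c i : k) := by
    ext1 i j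
    rcases eq_or_ne i j with rfl | hij
    · simp
    · simp [hij, pderiv_X]
  rw [IsJacobian, jacobian_eq, Matrix.det_diagonal, ← map_prod, ← C_1, C_inj, ← Units.val_inj,
    Units.coe_prod, Units.val_one]

theorem elementary_eq_commutator_general [Infinite k] (hn : 2 ≤ n)
    (F : PolyAut k n) (hF : IsElementary F) :
    ∃ E D : PolyAut k n, IsElementary E ∧ IsDiagonal D ∧ IsJacobian D ∧
      F = D⁻¹ * E * D * E⁻¹ := by
  obtain ⟨i, g, hg, rfl⟩ := isElementary_iff_exists_eq_elementaryAut.1 hF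
  obtain ⟨u, hu⟩ := exists_units_pow_ne_one k (g.totalDegree + (n - 1))
  let c := balancedWeights i u
  have nonresonant (a : Fin n →₀ ℕ) (ha : a ∈ g.support) :
      (a.prod fun j m => (c j : k) ^ m) ≠ c i := by
    have ha_degree : a.degree ≤ g.totalDegree := le_totalDegree ha
    have hu_pow : u ^ (a.degree + (Fintype.card (Fin n) - 1)) ≠ 1 := by
      rw [Fintype.card_fin]
      exact hu _ (by lia) (by lia)
    have h_units := prod_balancedWeights_pow_ne_self (mem_support_notMem_vars_zero ha hg) hu_pow
    contrapose! h_units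
    ext
    simpa [c, Finsupp.prod] using h_units
  obtain ⟨h, hvars, hgh⟩ := exists_scaleHom_add_eq_C_mul nonresonant
  have hh : i ∉ h.vars := fun hi => hg (hvars hi)
  exact ⟨elementaryAut i h hh, diagonalAut c,
    isElementary_iff_exists_eq_elementaryAut.2 ⟨i, h, hh, rfl⟩, isDiagonal_diagonalAut c,
    isJacobian_diagonalAut_iff.2 (prod_balancedWeights i u),
    (commutator_diagonalAut_elementaryAut hg hh hgh).symm⟩

end PolyAut

/-- For `n ≥ 2`, every elementary automorphism `F` can be written as
`F = (E⁻¹∘D∘E)∘D⁻¹` (composition of polynomial maps) with `E` elementary and `D` diagonal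
with jacobian determinant 1.  Under the identification with algebra automorphisms (where
polynomial-map composition is reversed), this reads `F = D⁻¹ * E * D * E⁻¹`. -/
theorem elementary_eq_commutator (k : Type*) [Field k] [CharZero k] (n : ℕ) (hn : 2 ≤ n)
    (F : PolyAut k n) (hF : IsElementary F) :
    ∃ E D : PolyAut k n, IsElementary E ∧ IsDiagonal D ∧ IsJacobian D ∧
      F = D⁻¹ * E * D * E⁻¹ := by
  exact elementary_eq_commutator_general hn F hF
end

section
/- Let σ := Y² + XZ ∈ k[X,Y,Z]. The k-algebra endomorphism φ of k[X,Y,Z] with φ(X) = X − 2σY − σ²Z, φ(Y) = Y + σZ, φ(Z) = Z and the k-algebra endomorphism ψ with ψ(X) = X + 2σY − σ²Z, ψ(Y) = Y − σZ, ψ(Z) = Z satisfy φ∘ψ = id and ψ∘φ = id; in particular the Nagata map defines an automorphism of k[X,Y,Z] with inverse corresponding to the polynomial map (X+2σY−σ²Z, Y−σZ, Z). -/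
open MvPolynomial

/-!
The derivation `D = Z ∂_Y - 2 Y ∂_X` is locally nilpotent and kills `σ = Y² + X Z`. For `f` and
`g` in `ker D`, `exp (f D) ∘ exp (g D) = exp ((f + g) D)`. The Nagata map is `exp (σ D)`, so its
inverse is `exp (-σ D)`.
-/

section NagataShear

variable {R : Type*} [CommRing R]

/-- The endomorphism of `R[X,Y,Z]` obtained from the exponential `exp (t D)` of
`D = Z ∂_Y - 2 Y ∂_X` by putting `t = f`; it is `exp (f D)` when `D f = 0`, and the Nagata map
when `f = Y² + X Z`. Since `D² X = -2 Z`, the factor `1 / 2!` cancels and the formula makes sense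
over every commutative ring. -/
noncomputable def nagataShear (f : MvPolynomial (Fin 3) R) :
    MvPolynomial (Fin 3) R →ₐ[R] MvPolynomial (Fin 3) R :=
  aeval ![X 0 - 2 * f * X 1 - f ^ 2 * X 2, X 1 + f * X 2, X 2]

variable (f : MvPolynomial (Fin 3) R)

@[simp]
theorem nagataShear_X_zero :
    nagataShear f (X 0) = X 0 - 2 * f * X 1 - f ^ 2 * X 2 := by
  simp [nagataShear]

@[simp]
theorem nagataShear_X_one : nagataShear f (X 1) = X 1 + f * X 2 := by
  simp [nagataShear]

@[simp]
theorem nagataShear_X_two : nagataShear f (X 2) = X 2 := by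
  simp [nagataShear]

theorem nagataShear_zero : nagataShear (0 : MvPolynomial (Fin 3) R) = AlgHom.id R _ := by
  ext i : 1
  fin_cases i <;> simp

theorem nagataShear_quadric :
    nagataShear f (X 1 ^ 2 + X 0 * X 2) = X 1 ^ 2 + X 0 * X 2 := by
  simp only [map_add, map_mul, map_pow, nagataShear_X_zero, nagataShear_X_one, nagataShear_X_two]
  ring

variable {f} {g : MvPolynomial (Fin 3) R}

theorem nagataShear_comp_of_fixed (hg : nagataShear f g = g) :
    (nagataShear f).comp (nagataShear g) = nagataShear (f + g) := by
  ext i : 1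
  fin_cases i
  · change nagataShear f (nagataShear g (X 0)) = nagataShear (f + g) (X 0)
    simp only [nagataShear_X_zero, nagataShear_X_one, nagataShear_X_two, map_sub, map_mul,
      map_pow, map_ofNat, hg]
    ring
  · change nagataShear f (nagataShear g (X 1)) = nagataShear (f + g) (X 1)
    simp only [nagataShear_X_one, nagataShear_X_two, map_add, map_mul, hg]
    ring
  · simp

theorem nagataShear_comp_neg_of_fixed (hf : nagataShear f f = f) :
    (nagataShear f).comp (nagataShear (-f)) = AlgHom.id R _ := by
  have hneg : nagataShear f (-f) = -f := by rw [map_neg, hf]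
  rw [nagataShear_comp_of_fixed hneg, add_neg_cancel, nagataShear_zero]

end NagataShear

theorem nagata_inverse_general (R : Type*) [CommRing R]
    (σ : MvPolynomial (Fin 3) R) (hσ : σ = (X 1) ^ 2 + X 0 * X 2)
    (φ ψ : MvPolynomial (Fin 3) R →ₐ[R] MvPolynomial (Fin 3) R)
    (hφ : φ = aeval ![X 0 - 2 * σ * X 1 - σ ^ 2 * X 2, X 1 + σ * X 2, X 2])
    (hψ : ψ = aeval ![X 0 + 2 * σ * X 1 - σ ^ 2 * X 2, X 1 - σ * X 2, X 2]) :
    φ.comp ψ = AlgHom.id R (MvPolynomial (Fin 3) R) ∧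
      ψ.comp φ = AlgHom.id R (MvPolynomial (Fin 3) R) := by
  have hfixed (f : MvPolynomial (Fin 3) R) : nagataShear f σ = σ := by
    rw [hσ, nagataShear_quadric]
  have hφσ : φ = nagataShear σ := hφ
  have hψσ : ψ = nagataShear (-σ) := by
    simp [hψ, nagataShear, sub_eq_add_neg]
  rw [hφσ, hψσ]
  constructor
  · exact nagataShear_comp_neg_of_fixed (hfixed σ)
  · have hneg : nagataShear (-σ) (-σ) = -σ := by rw [map_neg, hfixed]
    simpa only [neg_neg] using nagataShear_comp_neg_of_fixed hneg

/-- Write `k[X,Y,Z] = MvPolynomial (Fin 3) k` with `X = X 0`, `Y = X 1`, `Z = X 2`;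
a triple of polynomials `(G₁,G₂,G₃)` determines the `k`-algebra endomorphism
`aeval ![G₁,G₂,G₃]` sending `X ↦ G₁`, `Y ↦ G₂`, `Z ↦ G₃`.

Let `σ = Y² + XZ`.  The endomorphism `φ` given by
`(X − 2σY − σ²Z, Y + σZ, Z)` (the Nagata map) and the endomorphism `ψ` given by
`(X + 2σY − σ²Z, Y − σZ, Z)` satisfy `φ∘ψ = id` and `ψ∘φ = id`; in particular the Nagata
map is an automorphism of `k[X,Y,Z]` with inverse corresponding to
`(X + 2σY − σ²Z, Y − σZ, Z)`. -/
theorem nagata_inverse (k : Type*) [Field k] [CharZero k]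
    (σ : MvPolynomial (Fin 3) k) (hσ : σ = (X 1) ^ 2 + X 0 * X 2)
    (φ ψ : MvPolynomial (Fin 3) k →ₐ[k] MvPolynomial (Fin 3) k)
    (hφ : φ = aeval ![X 0 - 2 * σ * X 1 - σ ^ 2 * X 2, X 1 + σ * X 2, X 2])
    (hψ : ψ = aeval ![X 0 + 2 * σ * X 1 - σ ^ 2 * X 2, X 1 - σ * X 2, X 2]) :
    φ.comp ψ = AlgHom.id k (MvPolynomial (Fin 3) k) ∧
      ψ.comp φ = AlgHom.id k (MvPolynomial (Fin 3) k) :=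
  nagata_inverse_general k σ hσ φ ψ hφ hψ
end
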